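/- Let P be a nonzero polynomial with complex coefficients and let L ≥ 2 be an integer. Then for Lebesgue-almost every k ∈ ℝ the Birkhoff-type averages along the orbit of the times-L map converge to the logarithmic Mahler measure: lim_{n→∞} (1/n)·Σ_{m=0}^{n−1} log|P(e^{2πi L^m k})| = ∫₀¹ log|P(e^{2πit})| dt. -/

import Mathlib

open Filter Polynomial

noncomputable section

/-- `e k = exp(2πik)`. -/
def e (k : ℝ) : ℂ := Complex.exp (2 * Real.pi * Complex.I * k)

/-!
Birkhoff's pointwise theorem for an ergodic map `T` follows from the running maxima
`M n = max (S 0, …, S n)` of the Birkhoff sums `S` of `f`. They satisfy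
`M (n + 1) - M n ∘ T = max (-M n ∘ T, f)`, an increment with nonnegative integral because `T`
preserves the measure. If the Birkhoff sums are almost everywhere unbounded above, the increment
tends to `f`, dominated by `|f|`, so `0 ≤ ∫ f`. Boundedness above is an invariant property, hence by
ergodicity the sums of a function of negative integral are almost everywhere bounded above; applied
to `f - d` and `d - f` for constants `d`, this squeezes the averages. Multiplication by `L` is
ergodic on the circle, and `log ‖P‖` is integrable there because its singularities are logarithmic.
-/

open MeasureTheory Measure Set
open scoped Topology Real

section BirkhoffSum

variable {α M : Type*} [AddCommGroup M] [Lattice M] [AddLeftMono M]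

theorem partialSups_birkhoffSum_succ (T : α → α) (f : α → M) (n : ℕ) (x : α) :
    partialSups (birkhoffSum T f · x) (n + 1) =
      0 ⊔ (f x + partialSups (birkhoffSum T f · (T x)) n) := by
  simp only [partialSups_add_one', Function.comp_def, birkhoffSum_succ', ← partialSups_const_add,
    Nat.bot_eq_zero, birkhoffSum_zero]

theorem bddAbove_range_birkhoffSum_apply_iff (T : α → α) (f : α → M) (x : α) :
    BddAbove (range (birkhoffSum T f · (T x))) ↔ BddAbove (range (birkhoffSum T f · x)) := by
  have shift : range (birkhoffSum T f · x) =
      insert 0 (OrderIso.addLeft (f x) '' range (birkhoffSum T f · (T x))) := by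
    rw [← Nat.range_of_succ, ← range_comp]
    simp [Function.comp_def, birkhoffSum_succ', singleton_union]
  rw [shift, bddAbove_insert, OrderIso.bddAbove_image]

end BirkhoffSum

theorem eventually_birkhoffAverage_lt_of_bddAbove {α : Type*} {T : α → α} {f : α → ℝ} {x : α}
    {c d : ℝ} (hdc : d < c)
    (hbdd : BddAbove (range (birkhoffSum T (fun y ↦ f y - d) · x))) :
    ∀ᶠ n in atTop, birkhoffAverage ℝ T f n x < c := by
  obtain ⟨C, hC⟩ := hbdd
  have bound_tendsto : Tendsto (fun n : ℕ ↦ C / n + d) atTop (𝓝 d) := by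
    simpa using (tendsto_const_div_atTop_nhds_zero_nat C).add_const d
  filter_upwards [bound_tendsto.eventually_lt_const hdc, eventually_gt_atTop 0] with n hlt hn
  refine lt_of_le_of_lt ?_ hlt
  have hsum : birkhoffSum T f n x - n * d ≤ C := by
    simpa [birkhoffSum, Finset.sum_sub_distrib] using hC (mem_range_self n)
  have hn : (0 : ℝ) < n := Nat.cast_pos.2 hn
  rw [birkhoffAverage, smul_eq_mul, inv_mul_le_iff₀ hn, mul_add, mul_div_cancel₀ _ hn.ne']
  linarith

theorem nullMeasurableSet_bddAbove_range {α ι β : Type*} [MeasurableSpace α] {μ : Measure α}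
    [Countable ι] [TopologicalSpace β] [SecondCountableTopology β] [LinearOrder β] [OrderTopology β]
    [MeasurableSpace β] [BorelSpace β] {f : ι → α → β} (hf : ∀ i, AEMeasurable (f i) μ) :
    NullMeasurableSet {x | BddAbove (range (f · x))} μ := by
  refine (measurableSet_bddAbove_range fun i ↦ (hf i).measurable_mk).nullMeasurableSet.congr ?_
  filter_upwards [ae_all_iff.2 fun i ↦ (hf i).ae_eq_mk] with x hx
  exact congrArg (fun u ↦ BddAbove (range u)) (funext hx).symm

section Ergodic

variable {α : Type*} [MeasurableSpace α] {μ : Measure α} {T : α → α}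

theorem integrable_partialSups {β : Type*} [NormedAddCommGroup β] [Lattice β] [HasSolidNorm β]
    [IsOrderedAddMonoid β] {f : ℕ → α → β} (hf : ∀ n, Integrable (f n) μ) (n : ℕ) :
    Integrable (fun x ↦ partialSups (f · x) n) μ := by
  induction n with
  | zero => simpa using hf 0
  | succ n ih => simpa only [partialSups_add_one] using! ih.sup (hf (n + 1))

theorem integrable_birkhoffSum {E : Type*} [NormedAddCommGroup E] {f : α → E}
    (hT : MeasurePreserving T μ μ) (hf : Integrable f μ) (n : ℕ) :
    Integrable (birkhoffSum T f n) μ :=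
  integrable_finsetSum _ fun k _ ↦ (hT.iterate k).integrable_comp_of_integrable hf

theorem integral_comp_of_measurePreserving {β E : Type*} [MeasurableSpace β] {ν : Measure β}
    [NormedAddCommGroup E] [NormedSpace ℝ E] {φ : α → β} {g : β → E}
    (hφ : MeasurePreserving φ μ ν) (hg : AEStronglyMeasurable g ν) :
    ∫ x, g (φ x) ∂μ = ∫ y, g y ∂ν := by
  rw [← hφ.map_eq] at hg ⊢
  exact (integral_map hφ.aemeasurable hg).symm

variable {f : α → ℝ}

theorem integral_nonneg_of_ae_not_bddAbove_birkhoffSum (hT : MeasurePreserving T μ μ)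
    (hf : Integrable f μ) (hunbdd : ∀ᵐ x ∂μ, ¬BddAbove (range (birkhoffSum T f · x))) :
    0 ≤ ∫ x, f x ∂μ := by
  let M (n : ℕ) (x : α) : ℝ := partialSups (birkhoffSum T f · x) n
  have M_int (n : ℕ) : Integrable (M n) μ := integrable_partialSups (integrable_birkhoffSum hT hf) n
  have M_comp_int (n : ℕ) : Integrable (fun x ↦ M n (T x)) μ :=
    hT.integrable_comp_of_integrable (M_int n)
  have M_nonneg (n : ℕ) (x : α) : 0 ≤ M n x :=
    le_partialSups_of_le (birkhoffSum T f · x) n.zero_le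
  have increment_eq (n : ℕ) (x : α) : M (n + 1) x - M n (T x) = max (-M n (T x)) (f x) := by
    simp only [M, partialSups_birkhoffSum_succ, ← max_sub_sub_right, zero_sub,
      add_sub_cancel_right]
  have integral_increment_nonneg (n : ℕ) : 0 ≤ ∫ x, max (-M n (T x)) (f x) ∂μ := by
    simp only [← increment_eq]
    rw [integral_sub (M_int _) (M_comp_int _),
      integral_comp_of_measurePreserving hT (M_int n).aestronglyMeasurable, sub_nonneg]
    exact integral_mono (M_int _) (M_int _) fun x ↦ (partialSups _).monotone n.le_succ
  refine ge_of_tendsto' (tendsto_integral_of_dominated_convergence (fun x ↦ |f x|)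
    (fun n ↦ ((M_comp_int n).neg.sup hf).aestronglyMeasurable) hf.abs (fun n ↦ ?_) ?_)
    integral_increment_nonneg
  · refine .of_forall fun x ↦ abs_le.2 ⟨(neg_abs_le _).trans (le_max_right _ _), max_le ?_ ?_⟩
    · exact (neg_nonpos.2 (M_nonneg n (T x))).trans (abs_nonneg _)
    · exact le_abs_self _
  · filter_upwards [hT.quasiMeasurePreserving.ae hunbdd] with x hx
    have M_tendsto : Tendsto (M · (T x)) atTop atTop :=
      tendsto_atTop_atTop_of_monotone' (partialSups _).monotone
        (bddAbove_range_partialSups.not.2 hx)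
    refine tendsto_const_nhds.congr' ?_
    filter_upwards [M_tendsto.eventually_ge_atTop (-f x)] with n hn
    exact (max_eq_right (neg_le.1 hn)).symm

theorem ae_bddAbove_birkhoffSum_of_integral_neg (hT : Ergodic T μ) (hf : Integrable f μ)
    (hneg : ∫ x, f x ∂μ < 0) : ∀ᵐ x ∂μ, BddAbove (range (birkhoffSum T f · x)) := by
  have hmeas : NullMeasurableSet {x | BddAbove (range (birkhoffSum T f · x))} μ :=
    nullMeasurableSet_bddAbove_range fun n ↦
      (integrable_birkhoffSum hT.toMeasurePreserving hf n).aemeasurable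
  have hinv : T ⁻¹' {x | BddAbove (range (birkhoffSum T f · x))} =
      {x | BddAbove (range (birkhoffSum T f · x))} :=
    Set.ext (bddAbove_range_birkhoffSum_apply_iff T f)
  refine (hT.quasiErgodic.ae_mem_or_ae_notMem₀ hmeas hinv.eventuallyEq).resolve_right fun h ↦ ?_
  exact hneg.not_ge (integral_nonneg_of_ae_not_bddAbove_birkhoffSum hT.toMeasurePreserving hf h)

theorem ae_eventually_birkhoffAverage_lt [IsFiniteMeasure μ] (hT : Ergodic T μ)
    (hf : Integrable f μ) {c : ℝ} (hc : ⨍ x, f x ∂μ < c) :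
    ∀ᵐ x ∂μ, ∀ᶠ n in atTop, birkhoffAverage ℝ T f n x < c := by
  rcases eq_or_ne μ 0 with rfl | hμ
  · simp
  have : NeZero μ := ⟨hμ⟩
  obtain ⟨d, hd, hdc⟩ := exists_between hc
  have hneg : ∫ x, f x - d ∂μ < 0 := by
    rw [integral_sub hf (integrable_const d), ← measure_smul_average, integral_const, ← smul_sub]
    exact mul_neg_of_pos_of_neg measureReal_univ_pos (sub_neg.2 hd)
  filter_upwards [ae_bddAbove_birkhoffSum_of_integral_neg hT (hf.sub (integrable_const d)) hneg]
    with x hx using eventually_birkhoffAverage_lt_of_bddAbove hdc hx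

theorem ae_tendsto_birkhoffAverage [IsFiniteMeasure μ] (hT : Ergodic T μ) (hf : Integrable f μ) :
    ∀ᵐ x ∂μ, Tendsto (birkhoffAverage ℝ T f · x) atTop (𝓝 (⨍ y, f y ∂μ)) := by
  have upper : ∀ᵐ x ∂μ, ∀ q : ℚ, ⨍ y, f y ∂μ < q →
      ∀ᶠ n in atTop, birkhoffAverage ℝ T f n x < q :=
    ae_all_iff.2 fun q ↦ eventually_imp_distrib_left.2 (ae_eventually_birkhoffAverage_lt hT hf)
  have lower : ∀ᵐ x ∂μ, ∀ q : ℚ, q < ⨍ y, f y ∂μ →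
      ∀ᶠ n in atTop, q < birkhoffAverage ℝ T f n x := by
    refine ae_all_iff.2 fun q ↦ eventually_imp_distrib_left.2 fun hq ↦ ?_
    have hq' : ⨍ y, (-f) y ∂μ < -q := by simpa [average_neg] using hq
    simpa [birkhoffAverage_neg] using ae_eventually_birkhoffAverage_lt hT hf.neg hq'
  filter_upwards [upper, lower] with x hupper hlower
  refine tendsto_order.2 ⟨fun a ha ↦ ?_, fun b hb ↦ ?_⟩
  · obtain ⟨q, haq, hq⟩ := exists_rat_btwn ha
    exact (hlower q hq).mono fun n ↦ haq.trans
  · obtain ⟨q, hq, hqb⟩ := exists_rat_btwn hb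
    exact (hupper q hq).mono fun n hn ↦ hn.trans hqb

end Ergodic

section AddCircle

variable {T : ℝ} [hT : Fact (0 < T)]

theorem quasiMeasurePreserving_coe_addCircle :
    QuasiMeasurePreserving ((↑) : ℝ → AddCircle T) := by
  refine ⟨AddCircle.measurable_mk', AbsolutelyContinuous.mk fun s hs hs0 ↦ ?_⟩
  rw [map_apply AddCircle.measurable_mk' hs]
  refine (isAddFundamentalDomain_Ioc hT.out 0).measure_zero_of_invariant _ (fun g ↦ ?_) ?_
  · have coe_neg_vadd (x : ℝ) : ((-g +ᵥ x : ℝ) : AddCircle T) = x :=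
      (QuotientAddGroup.eq.2 (by simp [AddSubgroup.vadd_def])).symm
    ext x
    simp only [mem_vadd_set_iff_neg_vadd_mem, mem_preimage, coe_neg_vadd]
  · rw [← AddCircle.add_projection_respects_measure T 0 hs, hs0]

theorem integrable_addCircle_iff_intervalIntegrable {E : Type*} [NormedAddCommGroup E]
    {F : AddCircle T → E} (t : ℝ) :
    Integrable F ↔ IntervalIntegrable (fun x : ℝ ↦ F x) volume t (t + T) := by
  have factor : (fun x : Ioc t (t + T) ↦ F (x : ℝ)) ∘ AddCircle.measurableEquivIoc T t = F := by
    ext y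
    exact congrArg F (AddCircle.coe_equivIoc (p := T) (a := t))
  calc
    Integrable F ↔ Integrable (fun x : Ioc t (t + T) ↦ F (x : ℝ)) (volume.comap Subtype.val) := by
      conv_lhs => rw [← factor]
      exact (AddCircle.measurePreserving_equivIoc T).integrable_comp_emb
        (AddCircle.measurableEquivIoc T t).measurableEmbedding
    _ ↔ IntegrableOn (fun x : ℝ ↦ F x) (Ioc t (t + T)) :=
      (integrableOn_iff_comap_subtypeVal (f := fun x : ℝ ↦ F x) measurableSet_Ioc).symm
    _ ↔ IntervalIntegrable (fun x : ℝ ↦ F x) volume t (t + T) :=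
      (intervalIntegrable_iff_integrableOn_Ioc_of_le
        (le_add_of_nonneg_right hT.out.le)).symm

theorem ae_tendsto_birkhoffAverage_zsmul {F : AddCircle T → ℝ} (hF : Integrable F) {L : ℤ}
    (hL : 1 < |L|) :
    ∀ᵐ k : ℝ, Tendsto (fun n ↦ birkhoffAverage ℝ (L • ·) F n (k : AddCircle T)) atTop
      (𝓝 (⨍ x, F x)) :=
  quasiMeasurePreserving_coe_addCircle.ae
    (ae_tendsto_birkhoffAverage (AddCircle.ergodic_zsmul hL) hF)

end AddCircle

theorem e_eq_circleMap (k : ℝ) : e k = circleMap 0 1 (2 * π * k) := by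
  simp only [e, circleMap]
  push_cast
  ring_nf

theorem e_eq_toCircle (k : ℝ) : e k = AddCircle.toCircle (k : UnitAddCircle) := by
  rw [e_eq_circleMap, AddCircle.toCircle_apply_mk]
  simp [circleMap]

theorem intervalIntegrable_comp_e_iff {E : Type*} [NormedAddCommGroup E] {g : ℂ → E} :
    IntervalIntegrable (fun k ↦ g (e k)) volume 0 1 ↔ CircleIntegrable g 0 1 := by
  simp only [e_eq_circleMap, CircleIntegrable]
  rw [← IntervalIntegrable.comp_mul_left_iff (f := fun θ ↦ g (circleMap 0 1 θ))
    Real.two_pi_pos.ne', zero_div, div_self Real.two_pi_pos.ne']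

theorem Birkhoff_average_log_abs_poly_tendsto_mahler_general {g : ℂ → ℝ}
    (hg : CircleIntegrable g 0 1) {L : ℤ} (hL : 1 < |L|) :
    ∀ᵐ k : ℝ,
      Tendsto (fun n : ℕ ↦ (1 / n : ℝ) * ∑ m ∈ Finset.range n, g (e ((L : ℝ) ^ m * k)))
        atTop (𝓝 (∫ t in (0 : ℝ)..1, g (e t))) := by
  let F (x : UnitAddCircle) : ℝ := g (AddCircle.toCircle x)
  have F_coe (k : ℝ) : F k = g (e k) := by rw [e_eq_toCircle]
  have F_integrable : Integrable F := by
    rw [integrable_addCircle_iff_intervalIntegrable 0, zero_add]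
    simpa only [F_coe] using intervalIntegrable_comp_e_iff.2 hg
  have integral_F : ⨍ x, F x = ∫ t in (0 : ℝ)..1, g (e t) := by
    have : IsProbabilityMeasure (volume : Measure UnitAddCircle) := ⟨UnitAddCircle.measure_univ⟩
    simp only [average_eq_integral, ← F_coe]
    simpa using (UnitAddCircle.intervalIntegral_preimage 0 F).symm
  filter_upwards [ae_tendsto_birkhoffAverage_zsmul F_integrable hL] with k hk
  rw [← integral_F]
  refine hk.congr fun n ↦ ?_
  have orbit (m : ℕ) : F ((L • ·)^[m] (k : UnitAddCircle)) = g (e ((L : ℝ) ^ m * k)) := by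
    rw [smul_iterate, ← F_coe, ← Int.cast_pow, ← zsmul_eq_mul, AddCircle.coe_zsmul]
  simp only [birkhoffAverage, birkhoffSum, orbit, smul_eq_mul, one_div]

/-- For a nonzero complex polynomial `P` and an integer `L ≥ 2`, for
Lebesgue-a.e. `k ∈ ℝ` the Birkhoff-type averages along the orbit of the times-`L` map converge
to the logarithmic Mahler measure of `P`. -/
theorem Birkhoff_average_log_abs_poly_tendsto_mahler
    (P : Polynomial ℂ) (hP : P ≠ 0) (L : ℕ) (hL : 2 ≤ L) :
    ∀ᵐ k : ℝ,
      Tendsto (fun n : ℕ => (1 / n : ℝ) *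
          ∑ m ∈ Finset.range n, Real.log ‖P.eval (e ((L : ℝ) ^ m * k))‖)
        atTop (nhds (∫ t in (0:ℝ)..1, Real.log ‖P.eval (e t)‖)) := by
  exact_mod_cast Birkhoff_average_log_abs_poly_tendsto_mahler_general
    (g := fun z ↦ Real.log ‖P.eval z‖) P.intervalIntegrable_mahlerMeasure (L := L)
    (by simpa using Nat.lt_of_succ_le hL)
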